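/- Both the numerator and denominator appearing in the L'Hôpital computation of the τ-score vanish at the origin in the following sense. Fix n ≥ 1, integers m_t ≥ 1 and 0 ≤ y_t ≤ m_t, vectors x_t ∈ ℝʳ, β ∈ ℝʳ, and an n × n symmetric positive-definite matrix R. Define Λ(s) = ∫_{ℝⁿ} exp( Σ_{t=1}^n [ y_t (x_tᵀβ + s α_t) − m_t b(x_tᵀβ + s α_t) ] ) dN(0, R)(α) for s ∈ ℝ, where N(0, R) is the centered multivariate normal distribution with covariance R. Then Λ is differentiable at s = 0 and Λ'(0) = 0. -/

import Mathlib

/-!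
The derivative is taken under the integral sign. Each summand `y w - m b(w)` is nonpositive because
`0 ≤ y ≤ m` and `b(w) ≥ max(0, w)`, so the exponential factor is at most `1`; its `s`-derivative
carries the extra factor `∑ₜ αₜ (yₜ - mₜ ḃ(·))`, at most `∑ₜ mₜ |αₜ|` in absolute value. Hence
`∑ₜ mₜ |αₜ|` times the Gaussian density dominates the derivative for every `s`, and it is integrable
since `αᵀ R⁻¹ α ≥ c ∑ αᵢ²` for some `c > 0` (`exists_quadratic_lower_bound`). At `s = 0` the
differentiated integrand is a linear form in `α` times the even density, an odd function, so its
integral vanishes.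
-/

open MeasureTheory Real Finset Matrix

noncomputable section

/-- `b(w) = log(1 + e^w)`. -/
def bfun (w : ℝ) : ℝ := Real.log (1 + Real.exp w)

/-- The density of the centered multivariate normal `N(0, R)` on `ℝⁿ`:
`g(α, R) = (2π)^{−n/2} det(R)^{−1/2} exp(−(1/2) αᵀ R⁻¹ α)`. -/
def mvnDens {n : ℕ} (R : Matrix (Fin n) (Fin n) ℝ) (α : Fin n → ℝ) : ℝ :=
  (2 * Real.pi) ^ (-(n : ℝ) / 2) * R.det ^ (-(1 : ℝ) / 2)
    * Real.exp (-(1 / 2) * (α ⬝ᵥ (R⁻¹ *ᵥ α)))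

/-- The constant is the minimum of the quadratic form on the Euclidean unit sphere; homogeneity
extends the bound to all vectors. -/
lemma exists_quadratic_lower_bound {n : ℕ} {A : Matrix (Fin n) (Fin n) ℝ} (hA : A.PosDef) :
    ∃ c : ℝ, 0 < c ∧ ∀ α : Fin n → ℝ, c * ∑ i, α i ^ 2 ≤ α ⬝ᵥ (A *ᵥ α) := by
  have hcont : Continuous fun α : Fin n → ℝ => α ⬝ᵥ (A *ᵥ α) := by fun_prop
  have hcpt : IsCompact {α : Fin n → ℝ | ∑ i, α i ^ 2 = 1} := by
    refine Metric.isCompact_of_isClosed_isBounded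
      (isClosed_eq (by fun_prop) continuous_const) ?_
    refine (Metric.isBounded_closedBall (x := (0 : Fin n → ℝ)) (r := 1)).subset ?_
    intro α hα
    rw [mem_closedBall_zero_iff, pi_norm_le_iff_of_nonneg zero_le_one]
    intro i
    have h1 : α i ^ 2 ≤ ∑ i, α i ^ 2 :=
      Finset.single_le_sum (f := fun i => α i ^ 2) (fun i _ => sq_nonneg _) (Finset.mem_univ i)
    rw [hα] at h1
    rw [Real.norm_eq_abs]
    exact (sq_le_one_iff_abs_le_one _).1 h1
  have hbound : ∃ c : ℝ, 0 < c ∧ ∀ α : Fin n → ℝ, ∑ i, α i ^ 2 = 1 → c ≤ α ⬝ᵥ (A *ᵥ α) := by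
    -- The sphere is empty exactly when `n = 0`; any constant then works.
    rcases Set.eq_empty_or_nonempty {α : Fin n → ℝ | ∑ i, α i ^ 2 = 1} with he | hne
    · refine ⟨1, one_pos, fun α hα => ?_⟩
      have : α ∈ {α : Fin n → ℝ | ∑ i, α i ^ 2 = 1} := hα
      rw [he] at this
      exact this.elim
    · obtain ⟨α₀, h₀, hmin⟩ := hcpt.exists_isMinOn hne hcont.continuousOn
      refine ⟨_, ?_, fun α hα => hmin hα⟩
      have hne0 : α₀ ≠ 0 := by
        rintro rfl
        simp at h₀
      simpa using hA.dotProduct_mulVec_pos hne0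
  obtain ⟨c, hc, h⟩ := hbound
  refine ⟨c, hc, fun α => ?_⟩
  rcases eq_or_ne (∑ i, α i ^ 2) 0 with h0 | h0
  · have hα : α = 0 := by
      funext i
      have := (Finset.sum_eq_zero_iff_of_nonneg (fun i _ => sq_nonneg (α i))).1 h0 i
        (Finset.mem_univ i)
      simpa using this
    simp [hα]
  · have hS : 0 < ∑ i, α i ^ 2 :=
      lt_of_le_of_ne (Finset.sum_nonneg fun i _ => sq_nonneg _) (Ne.symm h0)
    set S := ∑ i, α i ^ 2 with hSdef
    have hsq : √S ^ 2 = S := Real.sq_sqrt hS.le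
    have hunit : ∑ i, (((√S)⁻¹ • α) i) ^ 2 = 1 := by
      simp only [Pi.smul_apply, smul_eq_mul, mul_pow, ← Finset.mul_sum, inv_pow, hsq]
      exact inv_mul_cancel₀ h0
    have := h _ hunit
    rw [mulVec_smul, smul_dotProduct, dotProduct_smul, smul_eq_mul, smul_eq_mul, ← mul_assoc,
      ← sq, inv_pow, hsq, inv_mul_eq_div, le_div_iff₀ hS] at this
    exact this

lemma integrable_prod_gaussian {n : ℕ} {c : ℝ} (hc : 0 < c) :
    Integrable fun α : Fin n → ℝ => Real.exp (-c * ∑ i, α i ^ 2) := by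
  have := Integrable.fintype_prod (𝕜 := ℝ) (μ := fun _ : Fin n => (volume : Measure ℝ))
    (f := fun _ x => Real.exp (-c * x ^ 2)) (fun _ => integrable_exp_neg_mul_sq hc)
  simp only [Finset.mul_sum, Real.exp_sum]
  exact this

lemma integrable_abs_mul_prod_gaussian {n : ℕ} {c : ℝ} (hc : 0 < c) (t : Fin n) :
    Integrable fun α : Fin n → ℝ => |α t| * Real.exp (-c * ∑ i, α i ^ 2) := by
  have h1 : Integrable fun x : ℝ => |x| * Real.exp (-c * x ^ 2) := by
    simpa [abs_mul] using (integrable_mul_exp_neg_mul_sq hc).abs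
  -- The integrand is a product over coordinates, with the factor `|x|` placed at `i = t` only.
  have := Integrable.fintype_prod (𝕜 := ℝ) (μ := fun _ : Fin n => (volume : Measure ℝ))
    (f := fun i x => (if i = t then |x| else 1) * Real.exp (-c * x ^ 2)) (fun i => by
      by_cases h : i = t
      · simpa [h] using h1
      · simpa [h] using integrable_exp_neg_mul_sq hc)
  simp only [Finset.prod_mul_distrib, Finset.prod_ite_eq', Finset.mem_univ, if_true] at this
  simp only [Finset.mul_sum, Real.exp_sum]
  exact this

lemma continuous_mvnDens {n : ℕ} (R : Matrix (Fin n) (Fin n) ℝ) : Continuous (mvnDens R) := by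
  unfold mvnDens
  fun_prop

lemma mvnDens_nonneg {n : ℕ} {R : Matrix (Fin n) (Fin n) ℝ} (hR : R.PosDef) (α : Fin n → ℝ) :
    0 ≤ mvnDens R α := by
  have := hR.det_pos
  unfold mvnDens
  positivity

lemma mvnDens_neg {n : ℕ} (R : Matrix (Fin n) (Fin n) ℝ) (α : Fin n → ℝ) :
    mvnDens R (-α) = mvnDens R α := by
  simp [mvnDens, mulVec_neg]

lemma exists_mvnDens_le {n : ℕ} {R : Matrix (Fin n) (Fin n) ℝ} (hR : R.PosDef) :
    ∃ K c : ℝ, 0 < c ∧ ∀ α, mvnDens R α ≤ K * Real.exp (-c * ∑ i, α i ^ 2) := by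
  obtain ⟨c, hc, h⟩ := exists_quadratic_lower_bound hR.inv
  refine ⟨(2 * Real.pi) ^ (-(n : ℝ) / 2) * R.det ^ (-(1 : ℝ) / 2), c / 2, by positivity,
    fun α => ?_⟩
  have := hR.det_pos
  unfold mvnDens
  refine mul_le_mul_of_nonneg_left (Real.exp_le_exp.2 ?_) (by positivity)
  linarith [h α]

lemma integrable_mvnDens {n : ℕ} {R : Matrix (Fin n) (Fin n) ℝ} (hR : R.PosDef) :
    Integrable (mvnDens R) := by
  obtain ⟨K, c, hc, h⟩ := exists_mvnDens_le hR
  refine ((integrable_prod_gaussian hc).const_mul K).mono'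
    (continuous_mvnDens R).aestronglyMeasurable (.of_forall fun α => ?_)
  rw [Real.norm_of_nonneg (mvnDens_nonneg hR α)]
  exact h α

lemma integrable_abs_mul_mvnDens {n : ℕ} {R : Matrix (Fin n) (Fin n) ℝ} (hR : R.PosDef)
    (t : Fin n) : Integrable fun α => |α t| * mvnDens R α := by
  obtain ⟨K, c, hc, h⟩ := exists_mvnDens_le hR
  refine ((integrable_abs_mul_prod_gaussian hc t).const_mul K).mono'
    (((continuous_apply t).abs.mul (continuous_mvnDens R)).aestronglyMeasurable)
    (.of_forall fun α => ?_)
  rw [Real.norm_of_nonneg (mul_nonneg (abs_nonneg _) (mvnDens_nonneg hR α))]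
  calc |α t| * mvnDens R α ≤ |α t| * (K * Real.exp (-c * ∑ i, α i ^ 2)) := by
        gcongr
        exact h α
    _ = _ := by ring

lemma continuous_bfun : Continuous bfun := by
  unfold bfun
  exact Continuous.log (by fun_prop) (fun w => by positivity)

lemma hasDerivAt_bfun (w : ℝ) :
    HasDerivAt bfun (Real.exp w / (1 + Real.exp w)) w :=
  ((Real.hasDerivAt_exp w).const_add 1).log (by positivity)

lemma mul_sub_mul_bfun_nonpos {y m : ℕ} (h : y ≤ m) (w : ℝ) :
    (y : ℝ) * w - m * bfun w ≤ 0 := by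
  have h0 : 0 ≤ bfun w := Real.log_nonneg (by linarith [Real.exp_pos w])
  have h1 : w ≤ bfun w := by
    rw [bfun, Real.le_log_iff_exp_le (by positivity)]
    linarith
  have hym : (y : ℝ) ≤ m := by exact_mod_cast h
  nlinarith [mul_le_mul_of_nonneg_left h1 (Nat.cast_nonneg (α := ℝ) y),
    mul_le_mul_of_nonneg_right hym h0]

lemma abs_sub_mul_logistic_le {y m : ℕ} (h : y ≤ m) (w : ℝ) :
    |(y : ℝ) - m * (Real.exp w / (1 + Real.exp w))| ≤ m := by
  have h0 : 0 ≤ Real.exp w / (1 + Real.exp w) := by positivity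
  have h1 : Real.exp w / (1 + Real.exp w) ≤ 1 := by
    rw [div_le_one (by positivity)]
    linarith
  have hym : (y : ℝ) ≤ m := by exact_mod_cast h
  have hy : (0 : ℝ) ≤ y := Nat.cast_nonneg y
  have hm : (0 : ℝ) ≤ m := Nat.cast_nonneg m
  rw [abs_le]
  constructor
  · nlinarith
  · nlinarith [mul_nonneg hm h0]

/-- With
`Λ(s) = ∫_{ℝⁿ} exp( Σ_t [ y_t (x_tᵀβ + s α_t) − m_t b(x_tᵀβ + s α_t) ] ) dN(0,R)(α)`
for `s ∈ ℝ`, the function `Λ` is differentiable at `s = 0` and `Λ'(0) = 0`. -/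
theorem statement3 (n r : ℕ) (hn : 1 ≤ n)
    (m : Fin n → ℕ) (hm : ∀ t, 1 ≤ m t)
    (y : Fin n → ℕ) (hy : ∀ t, y t ≤ m t)
    (x : Fin n → Fin r → ℝ) (β : Fin r → ℝ)
    (R : Matrix (Fin n) (Fin n) ℝ) (hRsymm : R.IsSymm) (hRpos : R.PosDef)
    (Λ : ℝ → ℝ)
    (hΛ : ∀ s, Λ s = ∫ α : Fin n → ℝ,
        Real.exp (∑ t, ((y t : ℝ) * (x t ⬝ᵥ β + s * α t)
          - (m t : ℝ) * bfun (x t ⬝ᵥ β + s * α t))) * mvnDens R α) :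
    HasDerivAt Λ 0 0 := by
  obtain rfl : Λ = _ := funext hΛ
  set E : ℝ → (Fin n → ℝ) → ℝ := fun s α => Real.exp (∑ t, ((y t : ℝ) * (x t ⬝ᵥ β + s * α t)
          - (m t : ℝ) * bfun (x t ⬝ᵥ β + s * α t))) with hE
  set D : ℝ → (Fin n → ℝ) → ℝ := fun s α => ∑ t, ((y t : ℝ) - m t *
    (Real.exp (x t ⬝ᵥ β + s * α t) / (1 + Real.exp (x t ⬝ᵥ β + s * α t)))) * α t with hD
  have hE0 : ∀ s α, 0 ≤ E s α := fun s α => (Real.exp_pos _).le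
  have hE1 : ∀ s α, E s α ≤ 1 := fun s α =>
    Real.exp_le_one_iff.2 (Finset.sum_nonpos fun t _ => mul_sub_mul_bfun_nonpos (hy t) _)
  have hEc : ∀ s, Continuous (E s) := fun s => by
    have := continuous_bfun
    fun_prop
  have hDc : ∀ s, Continuous (D s) := fun s => by
    refine continuous_finsetSum _ fun t _ => ?_
    refine (continuous_const.sub (continuous_const.mul (Continuous.div (by fun_prop)
      (by fun_prop) fun α => by positivity))).mul (by fun_prop)
  have hDb : ∀ s α, |D s α| ≤ ∑ t, (m t : ℝ) * |α t| := fun s α => by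
    refine (Finset.abs_sum_le_sum_abs _ _).trans (Finset.sum_le_sum fun t _ => ?_)
    rw [abs_mul]
    gcongr
    exact abs_sub_mul_logistic_le (hy t) _
  have hderiv : ∀ α s, HasDerivAt (fun s => E s α * mvnDens R α)
      (E s α * D s α * mvnDens R α) s := by
    intro α s
    refine (HasDerivAt.exp (HasDerivAt.fun_sum fun t _ => ?_)).mul_const _
    have hl : HasDerivAt (fun s => x t ⬝ᵥ β + s * α t) (α t) s := by
      simpa using ((hasDerivAt_id s).mul_const (α t)).const_add (x t ⬝ᵥ β)
    have h2 := (hl.const_mul (y t : ℝ)).sub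
      (((hasDerivAt_bfun (x t ⬝ᵥ β + s * α t)).comp s hl).const_mul (m t : ℝ))
    exact h2.congr_deriv (by ring)
  have key := hasDerivAt_integral_of_dominated_loc_of_deriv_le (μ := volume) (x₀ := (0 : ℝ))
    (s := Set.univ) (F := fun s α => E s α * mvnDens R α)
    (F' := fun s α => E s α * D s α * mvnDens R α)
    (bound := fun α => ∑ t, (m t : ℝ) * (|α t| * mvnDens R α))
    Filter.univ_mem
    (.of_forall fun s => ((hEc s).mul (continuous_mvnDens R)).aestronglyMeasurable)
    ((integrable_mvnDens hRpos).mono'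
      ((hEc 0).mul (continuous_mvnDens R)).aestronglyMeasurable (.of_forall fun α => by
        rw [Real.norm_of_nonneg (mul_nonneg (hE0 _ _) (mvnDens_nonneg hRpos α))]
        exact mul_le_of_le_one_left (mvnDens_nonneg hRpos α) (hE1 _ _)))
    (((hEc 0).mul (hDc 0)).mul (continuous_mvnDens R)).aestronglyMeasurable
    (.of_forall fun α s _ => by
      rw [norm_mul, norm_mul, Real.norm_of_nonneg (mvnDens_nonneg hRpos α),
        Real.norm_of_nonneg (hE0 s α), Real.norm_eq_abs]
      simp only [← mul_assoc, ← Finset.sum_mul]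
      refine mul_le_mul_of_nonneg_right ?_ (mvnDens_nonneg hRpos α)
      exact (mul_le_of_le_one_left (abs_nonneg _) (hE1 _ _)).trans (hDb s α))
    (integrable_finsetSum _ fun t _ =>
      (integrable_abs_mul_mvnDens hRpos t).const_mul (m t : ℝ))
    (.of_forall fun α s _ => hderiv α s)
  have hodd : ∫ α, E 0 α * D 0 α * mvnDens R α = 0 := by
    have h1 := integral_neg_eq_self (fun α => E 0 α * D 0 α * mvnDens R α) volume
    have h2 : ∀ α, E 0 (-α) * D 0 (-α) * mvnDens R (-α)
        = -(E 0 α * D 0 α * mvnDens R α) := by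
      intro α
      rw [mvnDens_neg]
      simp [hE, hD]
    simp only [h2, integral_neg] at h1
    linarith
  have := key.2
  rwa [hodd] at this

end
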